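/- arXiv:0712.3858 — 5 statements merged into one kernel-verified Lean document; each statement's English description precedes it below -/
import Mathlib

section
/- Assume the BNFP on G is feasible and δ > 0, and let k ∈ {1,…,φ} be the smallest index such that the maximum s–t flow value in G*(c_{σ(k)}) equals δ. Then the optimal objective value of the BNFP equals c_{σ(k)}. -/
open Finset

variable {N : Type*} [Fintype N] [DecidableEq N]

/-- Total flow out of node `i` along arcs in `A`. -/
def outflow (A : Finset (N × N)) (x : N × N → ℝ) (i : N) : ℝ :=
  ∑ e ∈ A.filter (fun e => e.1 = i), x e

/-- Total flow into node `i` along arcs in `A`. -/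
def inflow (A : Finset (N × N)) (x : N × N → ℝ) (i : N) : ℝ :=
  ∑ e ∈ A.filter (fun e => e.2 = i), x e

/-- Net flow out of node `i`. -/
def excess (A : Finset (N × N)) (x : N × N → ℝ) (i : N) : ℝ :=
  outflow A x i - inflow A x i

/-- `x` is an `s`-`t` flow on the digraph with arc set `A` and capacities `u`. -/
def IsFlow (A : Finset (N × N)) (u : N × N → ℝ) (s t : N) (x : N × N → ℝ) : Prop :=
  (∀ e, e ∉ A → x e = 0) ∧ (∀ e ∈ A, 0 ≤ x e ∧ x e ≤ u e) ∧
    (∀ i, i ≠ s → i ≠ t → excess A x i = 0)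

/-- The value of a flow: net flow out of the source `s`. -/
def flowValue (A : Finset (N × N)) (x : N × N → ℝ) (s : N) : ℝ := excess A x s

/-- `F` is the maximum `s`-`t` flow value. -/
def IsMaxFlowValue (A : Finset (N × N)) (u : N × N → ℝ) (s t : N) (F : ℝ) : Prop :=
  (∃ x, IsFlow A u s t x ∧ flowValue A x s = F) ∧
    ∀ x, IsFlow A u s t x → flowValue A x s ≤ F

/-- A feasible solution of the bottleneck network flow problem. -/
def IsBNFPSolution (E : Finset (N × N)) (u : N × N → ℤ) (b : N → ℤ) (x : N × N → ℝ) : Prop :=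
  (∀ e, e ∉ E → x e = 0) ∧ (∀ e ∈ E, 0 ≤ x e ∧ x e ≤ (u e : ℝ)) ∧
    (∀ i, excess E x i = (b i : ℝ))

/-- Supply nodes. -/
def supplyNodes (b : N → ℤ) : Finset N := univ.filter (fun i => 0 < b i)

/-- Demand nodes. -/
def demandNodes (b : N → ℤ) : Finset N := univ.filter (fun i => b i < 0)

/-- Total supply δ. -/
def totalSupply (b : N → ℤ) : ℤ := ∑ i ∈ supplyNodes b, b i

/-- Arc set of the auxiliary graph `G*`: nodes `V ⊕ Bool`, with source
`Sum.inr false` and sink `Sum.inr true`. -/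
def auxArcs (E : Finset (N × N)) (b : N → ℤ) : Finset ((N ⊕ Bool) × (N ⊕ Bool)) :=
  E.image (fun e => (Sum.inl e.1, Sum.inl e.2)) ∪
    (supplyNodes b).image (fun i => ((Sum.inr false : N ⊕ Bool), Sum.inl i)) ∪
    (demandNodes b).image (fun j => (Sum.inl j, (Sum.inr true : N ⊕ Bool)))

/-- Capacities of the auxiliary graph `G*`. -/
def auxCap (u : N × N → ℤ) (b : N → ℤ) : (N ⊕ Bool) × (N ⊕ Bool) → ℝ
  | (Sum.inl i, Sum.inl j) => (u (i, j) : ℝ)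
  | (Sum.inr _, Sum.inl i) => (b i : ℝ)
  | (Sum.inl j, Sum.inr _) => ((-b j : ℤ) : ℝ)
  | _ => 0

/-- Arc set of the spanning subgraph `G(α)`. -/
noncomputable def subArcs (E : Finset (N × N)) (c : N × N → ℤ) (α : ℝ) : Finset (N × N) :=
  E.filter (fun e => (c e : ℝ) ≤ α)

/-- Bottleneck objective value `max { c_ij : x_ij > 0 }` (as `WithBot ℤ`, `⊥` for empty support). -/
noncomputable def objVal (E : Finset (N × N)) (c : N × N → ℤ) (x : N × N → ℝ) : WithBot ℤ :=
  (E.filter (fun e => 0 < x e)).sup (fun e => (c e : WithBot ℤ))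

/-- Residual capacity of the pair `e` w.r.t. flow `x` on `(A, u)`. -/
def resCap (A : Finset (N × N)) (u : N × N → ℝ) (x : N × N → ℝ) (e : N × N) : ℝ :=
  ((if e ∈ A then u e else 0) - x e) + x e.swap

/-!
A vector on the arcs of `G` solves the BNFP exactly when, extended to `G*` so as to saturate all
arcs at the source and the sink, it is an `s`-`t` flow. Such a flow has value `δ`, the total
capacity at the source, which no flow exceeds; conversely a flow of value `δ` saturates every arc at
the source and, since the balances sum to zero, every arc at the sink. Hence the maximum flow value
in `G*(α)` is `δ` if and only if some feasible solution has objective value at most `α`. As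
`δ > 0` forces a nonzero flow, every objective value is itself an arc weight, and so the least
arc weight passing this test is the optimum.
-/

section Network

variable {V : Type*} [DecidableEq V] {A B : Finset (V × V)} {x : V × V → ℝ}

theorem excess_eq_of_subset (hAB : A ⊆ B) (hx : ∀ e, e ∉ A → x e = 0) (i : V) :
    excess A x i = excess B x i := by
  have sum_filter_eq (p : V × V → Prop) [DecidablePred p] :
      ∑ e ∈ A with p e, x e = ∑ e ∈ B with p e, x e := by
    refine sum_subset (filter_subset_filter p hAB) fun e heB heA => hx e fun he => ?_
    exact heA (mem_filter.2 ⟨he, (mem_filter.1 heB).2⟩)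
  rw [excess, excess, outflow, outflow, inflow, inflow, sum_filter_eq, sum_filter_eq]

theorem excess_eq_sum_sub_sum [Fintype V] (hx : ∀ e, e ∉ A → x e = 0) (i : V) :
    excess A x i = ∑ j, x (i, j) - ∑ j, x (j, i) := by
  rw [excess_eq_of_subset (subset_univ A) hx, excess, outflow, inflow, sum_filter, sum_filter,
    Fintype.sum_prod_type_right, Fintype.sum_prod_type]
  simp

theorem sum_excess [Fintype V] (A : Finset (V × V)) (x : V × V → ℝ) :
    ∑ i, excess A x i = 0 := by
  simp only [excess, outflow, inflow, sum_sub_distrib, sum_fiberwise, sub_self]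

theorem IsFlow.excess_sink [Finite V] {u : V × V → ℝ} {s t : V} (hst : s ≠ t)
    (hx : IsFlow A u s t x) : excess A x t = -flowValue A x s := by
  have := Fintype.ofFinite V
  have excess_add : excess A x s + excess A x t = 0 := by
    rw [← Fintype.sum_eq_add s t hst fun i hi => hx.2.2 i hi.1 hi.2, sum_excess]
  rw [flowValue]
  linarith

end Network

section Supply

variable {V : Type*} [Fintype V]

theorem totalSupply_eq_sum_posPart (b : V → ℤ) : totalSupply b = ∑ v, (b v)⁺ := by
  rw [totalSupply, supplyNodes, sum_filter]
  exact sum_congr rfl fun v _ => by rw [posPart_eq_ite_lt]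

theorem totalSupply_eq_sum_negPart {b : V → ℤ} (hb : ∑ i, b i = 0) :
    totalSupply b = ∑ v, (b v)⁻ := by
  rw [totalSupply_eq_sum_posPart, ← sub_eq_zero, ← sum_sub_distrib]
  simpa only [posPart_sub_negPart] using hb

theorem ne_zero_of_totalSupply_pos {b : V → ℤ} (hδ : 0 < totalSupply b) : b ≠ 0 := by
  rintro rfl
  simp [totalSupply] at hδ

end Supply

section AuxiliaryGraph

variable {V : Type*} [Fintype V] [DecidableEq V] {E : Finset (V × V)} {u : V × V → ℤ} {b : V → ℤ}

@[simp]
theorem inl_inl_mem_auxArcs {i j : V} :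
    ((.inl i, .inl j) : (V ⊕ Bool) × (V ⊕ Bool)) ∈ auxArcs E b ↔ (i, j) ∈ E := by
  simp [auxArcs]

@[simp]
theorem source_inl_mem_auxArcs {i : V} :
    ((.inr false, .inl i) : (V ⊕ Bool) × (V ⊕ Bool)) ∈ auxArcs E b ↔ 0 < b i := by
  simp [auxArcs, supplyNodes]

@[simp]
theorem inl_sink_mem_auxArcs {i : V} :
    ((.inl i, .inr true) : (V ⊕ Bool) × (V ⊕ Bool)) ∈ auxArcs E b ↔ b i < 0 := by
  simp [auxArcs, demandNodes]

@[simp]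
theorem inl_source_notMem_auxArcs {i : V} :
    ((.inl i, .inr false) : (V ⊕ Bool) × (V ⊕ Bool)) ∉ auxArcs E b := by
  simp [auxArcs]

@[simp]
theorem sink_inl_notMem_auxArcs {i : V} :
    ((.inr true, .inl i) : (V ⊕ Bool) × (V ⊕ Bool)) ∉ auxArcs E b := by
  simp [auxArcs]

@[simp]
theorem inr_inr_notMem_auxArcs {p q : Bool} :
    ((.inr p, .inr q) : (V ⊕ Bool) × (V ⊕ Bool)) ∉ auxArcs E b := by
  simp [auxArcs]

section Excess

variable {x : (V ⊕ Bool) × (V ⊕ Bool) → ℝ}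

theorem excess_auxArcs_source (hx : ∀ e, e ∉ auxArcs E b → x e = 0) :
    excess (auxArcs E b) x (.inr false) = ∑ v, x (.inr false, .inl v) := by
  simp [excess_eq_sum_sub_sum hx, hx _ inl_source_notMem_auxArcs, hx _ inr_inr_notMem_auxArcs]

theorem excess_auxArcs_sink (hx : ∀ e, e ∉ auxArcs E b → x e = 0) :
    excess (auxArcs E b) x (.inr true) = -∑ v, x (.inl v, .inr true) := by
  simp [excess_eq_sum_sub_sum hx, hx _ sink_inl_notMem_auxArcs, hx _ inr_inr_notMem_auxArcs]

theorem excess_auxArcs_inl (hx : ∀ e, e ∉ auxArcs E b → x e = 0) (v : V) :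
    excess (auxArcs E b) x (.inl v) =
      excess E (x ∘ Prod.map .inl .inl) v + x (.inl v, .inr true) - x (.inr false, .inl v) := by
  have restriction_eq_zero : ∀ e, e ∉ E → (x ∘ Prod.map .inl .inl) e = 0 :=
    fun e he => hx _ (inl_inl_mem_auxArcs.not.2 he)
  rw [excess_eq_sum_sub_sum hx, excess_eq_sum_sub_sum restriction_eq_zero]
  simp only [Fintype.sum_sum_type, Fintype.sum_bool, hx _ inl_source_notMem_auxArcs,
    hx _ sink_inl_notMem_auxArcs, Function.comp_apply, Prod.map_apply]
  ring

end Excess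

namespace IsFlow

variable {x : (V ⊕ Bool) × (V ⊕ Bool) → ℝ}

theorem source_inl_le (hx : IsFlow (auxArcs E b) (auxCap u b) (.inr false) (.inr true) x) (v : V) :
    x (.inr false, .inl v) ≤ ((b v)⁺ : ℤ) := by
  rcases lt_or_ge 0 (b v) with hv | hv
  · rw [posPart_of_nonneg hv.le]
    exact (hx.2.1 _ (source_inl_mem_auxArcs.2 hv)).2
  · simp [hx.1 _ (source_inl_mem_auxArcs.not.2 hv.not_gt), posPart_of_nonpos hv]

theorem inl_sink_le (hx : IsFlow (auxArcs E b) (auxCap u b) (.inr false) (.inr true) x) (v : V) :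
    x (.inl v, .inr true) ≤ ((b v)⁻ : ℤ) := by
  rcases lt_or_ge (b v) 0 with hv | hv
  · rw [negPart_of_nonpos hv.le]
    exact (hx.2.1 _ (inl_sink_mem_auxArcs.2 hv)).2
  · simp [hx.1 _ (inl_sink_mem_auxArcs.not.2 hv.not_gt), negPart_of_nonneg hv]

theorem flowValue_le_totalSupply
    (hx : IsFlow (auxArcs E b) (auxCap u b) (.inr false) (.inr true) x) :
    flowValue (auxArcs E b) x (.inr false) ≤ totalSupply b := by
  rw [flowValue, excess_auxArcs_source hx.1, totalSupply_eq_sum_posPart, Int.cast_sum]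
  exact sum_le_sum fun v _ => hx.source_inl_le v

theorem source_inl_eq_of_flowValue_eq
    (hx : IsFlow (auxArcs E b) (auxCap u b) (.inr false) (.inr true) x)
    (hval : flowValue (auxArcs E b) x (.inr false) = totalSupply b) (v : V) :
    x (.inr false, .inl v) = ((b v)⁺ : ℤ) := by
  refine (sum_eq_sum_iff_of_le fun v _ => hx.source_inl_le v).1 ?_ v (mem_univ v)
  rw [← excess_auxArcs_source hx.1, ← flowValue, hval, totalSupply_eq_sum_posPart, Int.cast_sum]

theorem inl_sink_eq_of_flowValue_eq (hb : ∑ i, b i = 0)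
    (hx : IsFlow (auxArcs E b) (auxCap u b) (.inr false) (.inr true) x)
    (hval : flowValue (auxArcs E b) x (.inr false) = totalSupply b) (v : V) :
    x (.inl v, .inr true) = ((b v)⁻ : ℤ) := by
  refine (sum_eq_sum_iff_of_le fun v _ => hx.inl_sink_le v).1 ?_ v (mem_univ v)
  rw [← neg_inj, ← excess_auxArcs_sink hx.1, hx.excess_sink (by simp), hval,
    totalSupply_eq_sum_negPart hb, Int.cast_sum]

theorem isBNFPSolution_restriction (hb : ∑ i, b i = 0)
    (hx : IsFlow (auxArcs E b) (auxCap u b) (.inr false) (.inr true) x)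
    (hval : flowValue (auxArcs E b) x (.inr false) = totalSupply b) :
    IsBNFPSolution E u b (x ∘ Prod.map .inl .inl) := by
  refine ⟨fun e he => hx.1 _ (inl_inl_mem_auxArcs.not.2 he),
    fun e he => hx.2.1 _ (inl_inl_mem_auxArcs.2 he), fun v => ?_⟩
  have conservation : excess (auxArcs E b) x (.inl v) = 0 := hx.2.2 _ (by simp) (by simp)
  calc
    excess E (x ∘ Prod.map .inl .inl) v = x (.inr false, .inl v) - x (.inl v, .inr true) := by
      rw [excess_auxArcs_inl hx.1] at conservation
      linarith
    _ = ((b v)⁺ - (b v)⁻ : ℤ) := by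
      rw [hx.source_inl_eq_of_flowValue_eq hval, hx.inl_sink_eq_of_flowValue_eq hb hval,
        Int.cast_sub]
    _ = b v := by rw [posPart_sub_negPart]

end IsFlow

/-- The extension of a vector `y` on the arcs of `G` to the arcs of `G*` that saturates every arc
leaving the source and every arc entering the sink. The positive and negative parts of `b` vanish
at nodes that are not joined to the source or to the sink, so no case distinction is needed. -/
def auxExtension (b : V → ℤ) (y : V × V → ℝ) : (V ⊕ Bool) × (V ⊕ Bool) → ℝ
  | (.inl i, .inl j) => y (i, j)
  | (.inr false, .inl i) => ((b i)⁺ : ℤ)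
  | (.inl i, .inr true) => ((b i)⁻ : ℤ)
  | _ => 0

namespace IsBNFPSolution

variable {y : V × V → ℝ}

theorem auxExtension_eq_zero (hy : IsBNFPSolution E u b y) (e : (V ⊕ Bool) × (V ⊕ Bool))
    (he : e ∉ auxArcs E b) : auxExtension b y e = 0 := by
  rcases e with ⟨i | _ | _, j | _ | _⟩ <;> simp_all [auxExtension, hy.1]

theorem auxExtension_nonneg_and_le_auxCap (hy : IsBNFPSolution E u b y)
    (e : (V ⊕ Bool) × (V ⊕ Bool)) (he : e ∈ auxArcs E b) :
    0 ≤ auxExtension b y e ∧ auxExtension b y e ≤ auxCap u b e := by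
  rcases e with ⟨i | _ | _, j | _ | _⟩ <;> simp_all [auxExtension, auxCap, hy.2.1, le_of_lt]

theorem isFlow_auxExtension (hy : IsBNFPSolution E u b y) :
    IsFlow (auxArcs E b) (auxCap u b) (.inr false) (.inr true) (auxExtension b y) := by
  refine ⟨hy.auxExtension_eq_zero, hy.auxExtension_nonneg_and_le_auxCap, ?_⟩
  rintro (v | _ | _) hs ht
  · calc
      excess (auxArcs E b) (auxExtension b y) (.inl v) = excess E y v + (b v)⁻ - (b v)⁺ :=
        excess_auxArcs_inl hy.auxExtension_eq_zero v
      _ = (b v - ((b v)⁺ - (b v)⁻) : ℤ) := by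
        rw [hy.2.2 v]
        push_cast
        ring
      _ = 0 := by rw [posPart_sub_negPart, sub_self, Int.cast_zero]
  · exact absurd rfl hs
  · exact absurd rfl ht

theorem flowValue_auxExtension (hy : IsBNFPSolution E u b y) :
    flowValue (auxArcs E b) (auxExtension b y) (.inr false) = totalSupply b := by
  rw [flowValue, excess_auxArcs_source hy.auxExtension_eq_zero, totalSupply_eq_sum_posPart,
    Int.cast_sum]
  rfl

end IsBNFPSolution

theorem isMaxFlowValue_totalSupply_iff (hb : ∑ i, b i = 0) :
    IsMaxFlowValue (auxArcs E b) (auxCap u b) (.inr false) (.inr true) (totalSupply b : ℝ) ↔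
      ∃ x, IsBNFPSolution E u b x := by
  constructor
  · rintro ⟨⟨x, hx, hval⟩, -⟩
    exact ⟨_, hx.isBNFPSolution_restriction hb hval⟩
  · rintro ⟨y, hy⟩
    exact ⟨⟨_, hy.isFlow_auxExtension, hy.flowValue_auxExtension⟩,
      fun x hx => hx.flowValue_le_totalSupply⟩

end AuxiliaryGraph

section Bottleneck

variable {V : Type*} {E : Finset (V × V)} {c u : V × V → ℤ} {b : V → ℤ} {x : V × V → ℝ} {α : ℤ}

theorem mem_subArcs {e : V × V} : e ∈ subArcs E c α ↔ e ∈ E ∧ c e ≤ α := by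
  simp [subArcs]

theorem objVal_le_iff : objVal E c x ≤ α ↔ ∀ e ∈ E, 0 < x e → c e ≤ α := by
  simp [objVal]

variable [DecidableEq V]

theorem isBNFPSolution_iff_of_subset {A : Finset (V × V)} (hu : ∀ e ∈ E, 0 ≤ u e) (hAE : A ⊆ E) :
    IsBNFPSolution A u b x ↔ IsBNFPSolution E u b x ∧ ∀ e, e ∉ A → x e = 0 := by
  constructor
  · rintro ⟨hzero, hcap, hexc⟩
    refine ⟨⟨fun e he => hzero e (mt (@hAE e) he), fun e he => ?_, fun i => ?_⟩, hzero⟩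
    · by_cases heA : e ∈ A
      · exact hcap e heA
      · simpa [hzero e heA] using hu e he
    · rw [← excess_eq_of_subset hAE hzero, hexc]
  · rintro ⟨⟨-, hcap, hexc⟩, hzero⟩
    exact ⟨hzero, fun e he => hcap e (hAE he),
      fun i => by rw [excess_eq_of_subset hAE hzero, hexc]⟩

theorem IsBNFPSolution.objVal_le_iff_eq_zero (hx : IsBNFPSolution E u b x) :
    objVal E c x ≤ α ↔ ∀ e, e ∉ subArcs E c α → x e = 0 := by
  rw [objVal_le_iff]
  constructor
  · intro hle e he
    by_cases heE : e ∈ E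
    · by_contra hne
      exact he (mem_subArcs.2 ⟨heE, hle e heE ((hx.2.1 e heE).1.lt_of_ne' hne)⟩)
    · exact hx.1 e heE
  · intro hzero e _ hpos
    by_contra hc
    exact hpos.ne' (hzero e fun he => hc (mem_subArcs.1 he).2)

theorem isBNFPSolution_subArcs_iff (hu : ∀ e ∈ E, 0 ≤ u e) :
    IsBNFPSolution (subArcs E c α) u b x ↔ IsBNFPSolution E u b x ∧ objVal E c x ≤ α := by
  rw [isBNFPSolution_iff_of_subset hu fun e he => (mem_subArcs.1 he).1]
  exact and_congr_right fun hx => hx.objVal_le_iff_eq_zero.symm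

namespace IsBNFPSolution

theorem exists_pos (hx : IsBNFPSolution E u b x) (hb : b ≠ 0) : ∃ e ∈ E, 0 < x e := by
  contrapose! hb
  have flow_eq_zero : ∀ e ∈ E, x e = 0 := fun e he => (hb e he).antisymm (hx.2.1 e he).1
  funext i
  have excess_eq_zero : excess E x i = 0 := by
    rw [excess, outflow, inflow, sum_eq_zero, sum_eq_zero, sub_self] <;>
      exact fun e he => flow_eq_zero e (mem_filter.1 he).1
  exact_mod_cast (hx.2.2 i).symm.trans excess_eq_zero

theorem exists_objVal_eq (hx : IsBNFPSolution E u b x) (hb : b ≠ 0) (c : V × V → ℤ) :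
    ∃ e ∈ E, objVal E c x = c e := by
  have support_nonempty : (E.filter fun e => 0 < x e).Nonempty :=
    filter_nonempty_iff.2 (hx.exists_pos hb)
  obtain ⟨e, he, hobj⟩ := exists_mem_eq_sup _ support_nonempty fun e => (c e : WithBot ℤ)
  exact ⟨e, (mem_filter.1 he).1, hobj⟩

end IsBNFPSolution

theorem isMaxFlowValue_subArcs_iff [Fintype V] (hu : ∀ e ∈ E, 0 ≤ u e) (hb : ∑ i, b i = 0) :
    IsMaxFlowValue (auxArcs (subArcs E c α) b) (auxCap u b) (.inr false) (.inr true)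
        (totalSupply b : ℝ) ↔
      ∃ x, IsBNFPSolution E u b x ∧ objVal E c x ≤ α := by
  simp only [isMaxFlowValue_totalSupply_iff hb, isBNFPSolution_subArcs_iff hu]

end Bottleneck

/-- Assume the BNFP is feasible and `δ > 0`, and let
`α = c_{σ(k)}` be the smallest distinct arc weight such that the maximum
`s`-`t` flow value in `G*(c_{σ(k)})` equals `δ`.  Then the optimal objective
value of the BNFP equals `c_{σ(k)}`. -/
theorem bnfp_optimal_value_eq_threshold
    (V : Type*) [Fintype V] [DecidableEq V] (E : Finset (V × V))
    (c : V × V → ℤ) (u : V × V → ℤ) (b : V → ℤ)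
    (hu : ∀ e ∈ E, 0 ≤ u e) (hb : ∑ i, b i = 0)
    (hfeas : ∃ x : V × V → ℝ, IsBNFPSolution E u b x)
    (hδ : 0 < totalSupply b)
    (α : ℤ) (hα : α ∈ E.image c)
    (hmax : IsMaxFlowValue (auxArcs (subArcs E c (α : ℝ)) b) (auxCap u b)
      (Sum.inr false) (Sum.inr true) (totalSupply b : ℝ))
    (hmin : ∀ β ∈ E.image c, β < α →
      ¬ IsMaxFlowValue (auxArcs (subArcs E c (β : ℝ)) b) (auxCap u b)
        (Sum.inr false) (Sum.inr true) (totalSupply b : ℝ)) :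
    (∃ x : V × V → ℝ, IsBNFPSolution E u b x ∧ objVal E c x = (α : WithBot ℤ)) ∧
      ∀ y : V × V → ℝ, IsBNFPSolution E u b y → (α : WithBot ℤ) ≤ objVal E c y := by
  have lower_bound : ∀ y, IsBNFPSolution E u b y → (α : WithBot ℤ) ≤ objVal E c y := by
    intro y hy
    obtain ⟨e, he, hobj⟩ := hy.exists_objVal_eq (ne_zero_of_totalSupply_pos hδ) c
    by_contra! hlt
    have hce : c e < α := by simpa only [hobj, WithBot.coe_lt_coe] using hlt
    exact hmin (c e) (mem_image_of_mem c he) hce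
      ((isMaxFlowValue_subArcs_iff hu hb).2 ⟨y, hy, hobj.le⟩)
  obtain ⟨x, hx, hle⟩ := (isMaxFlowValue_subArcs_iff hu hb).1 hmax
  exact ⟨⟨x, hx, hle.antisymm (lower_bound x hx)⟩, lower_bound⟩
end

section
/- (Theorem 3.3) Let m* = |E*| = m + |S| + |T| be the number of arcs of the auxiliary graph G*, and suppose x⁰, x¹, …, x^k is a sequence of s–t flows in (subgraphs of) G* with integer values such that v(x⁰) = 0, v(x^k) = δ ≥ 1, and for every 0 ≤ i < k the i-th augmentation strictly increases the flow value by at least (δ − v(x^i))/m*, i.e., v(x^{i+1}) − v(x^i) ≥ (δ − v(x^i))/m* and v(x^{i+1}) > v(x^i). Then the number of augmentations satisfies k ≤ m*·ln δ + 1; in particular, the large capacity augmenting path algorithm performs O(m·log(nB)) augmentations, where B = max_{i∈V}|b_i|. -/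
open Finset

variable {N : Type*} [Fintype N] [DecidableEq N]

/-!
The gap `gᵢ = δ - v(xⁱ)` to the target value loses at least the fraction `1 / m*` in each
augmentation, and `1 - 1 / m* ≤ exp (-1 / m*)`, so `gᵢ ≤ exp (-i / m*) * δ`. Just before the last
augmentation the gap is a positive integer, hence at least `1`; this forces `k - 1 ≤ m* * log δ`.
-/

lemma supplyNodes_nonempty_of_totalSupply_ne_zero {V : Type*} [Fintype V] {b : V → ℤ}
    (hb : totalSupply b ≠ 0) : (supplyNodes b).Nonempty :=
  nonempty_of_sum_ne_zero hb

lemma auxArcs_nonempty_of_supplyNodes_nonempty {V : Type*} [Fintype V] [DecidableEq V]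
    (E : Finset (V × V)) {b : V → ℤ} (hb : (supplyNodes b).Nonempty) : (auxArcs E b).Nonempty :=
  ((hb.image _).inr).inl

lemma le_exp_neg_pow_mul_of_mul_le_sub {r : ℝ} {g : ℕ → ℝ} {n : ℕ} (hg : ∀ i < n, 0 ≤ g i)
    (hdec : ∀ i < n, r * g i ≤ g i - g (i + 1)) : g n ≤ Real.exp (-r) ^ n * g 0 := by
  refine le_geom (Real.exp_nonneg _) n fun i hi => ?_
  calc g (i + 1) ≤ (1 - r) * g i := by linarith [hdec i hi]
    _ ≤ Real.exp (-r) * g i := mul_le_mul_of_nonneg_right (Real.one_sub_le_exp_neg r) (hg i hi)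

lemma nat_mul_le_log_div_of_mul_le_sub {r : ℝ} {g : ℕ → ℝ} {n : ℕ} (hg : ∀ i ≤ n, 0 < g i)
    (hdec : ∀ i < n, r * g i ≤ g i - g (i + 1)) : n * r ≤ Real.log (g 0 / g n) := by
  have hgn : 0 < g n := hg n le_rfl
  have hdecay : g n ≤ Real.exp (-(n * r)) * g 0 := by
    simpa only [← Real.exp_nat_mul, mul_neg] using
      le_exp_neg_pow_mul_of_mul_le_sub (fun i hi => (hg i hi.le).le) hdec
  rw [Real.le_log_iff_exp_le (div_pos (hg 0 n.zero_le) hgn), le_div_iff₀ hgn]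
  calc Real.exp (n * r) * g n ≤ Real.exp (n * r) * (Real.exp (-(n * r)) * g 0) := by gcongr
    _ = g 0 := by rw [← mul_assoc, ← Real.exp_add, add_neg_cancel, Real.exp_zero, one_mul]

lemma one_le_sub_of_lt_of_eq_intCast {R : Type*} [Ring R] [LinearOrder R] [IsStrictOrderedRing R]
    {a b : R} (ha : ∃ z : ℤ, a = z) (hb : ∃ z : ℤ, b = z) (hab : a < b) : 1 ≤ b - a := by
  obtain ⟨y, rfl⟩ := ha
  obtain ⟨z, rfl⟩ := hb
  exact_mod_cast Int.sub_pos.mpr (Int.cast_lt.mp hab)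

theorem large_capacity_augmentation_count_general {m δ : ℝ} {k : ℕ} {v : ℕ → ℝ} (hm : 0 < m)
    (hint : ∀ i ≤ k, ∃ z : ℤ, v i = z) (h0 : v 0 < δ) (hk : v k = δ)
    (hstep : ∀ i < k, v i < v (i + 1) ∧ (δ - v i) / m ≤ v (i + 1) - v i) :
    (k : ℝ) ≤ m * Real.log (δ - v 0) + 1 := by
  obtain _ | n := k
  · exact absurd hk h0.ne
  have hmono : StrictMonoOn v (Set.Iic (n + 1)) :=
    strictMonoOn_Iic_of_lt_succ fun i hi => (hstep i hi).1
  have hgap_pos : ∀ i ≤ n, 0 < δ - v i := fun i hi =>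
    sub_pos.mpr <| hk ▸ hmono (by grind) (by grind) (Nat.lt_succ_of_le hi)
  have hlast : 1 ≤ δ - v n :=
    one_le_sub_of_lt_of_eq_intCast (hint n n.le_succ) (hk ▸ hint (n + 1) le_rfl)
      (sub_pos.mp (hgap_pos n le_rfl))
  have hlog : n * m⁻¹ ≤ Real.log (δ - v 0) :=
    calc n * m⁻¹ ≤ Real.log ((δ - v 0) / (δ - v n)) :=
          nat_mul_le_log_div_of_mul_le_sub (g := fun i => δ - v i) hgap_pos fun i hi => by
            rw [sub_sub_sub_cancel_left, inv_mul_eq_div]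
            exact (hstep i (Nat.lt_succ_of_lt hi)).2
      _ ≤ Real.log (δ - v 0) :=
          Real.log_le_log (div_pos (sub_pos.mpr h0) (hgap_pos n le_rfl))
            (div_le_self (sub_pos.mpr h0).le hlast)
  rw [← div_eq_mul_inv, div_le_iff₀' hm] at hlog
  push_cast
  gcongr

/-- **Theorem 3.3.** Let `m* = |E*|` be the number of arcs of the
auxiliary graph `G*`.  If `x⁰, x¹, …, x^k` are `s`-`t` flows in subgraphs of
`G*` with integer values, `v(x⁰) = 0`, `v(x^k) = δ ≥ 1`, and each augmentation
strictly increases the value by at least `(δ − v(x^i)) / m*`, then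
`k ≤ m* ln δ + 1` (hence the large capacity augmenting path algorithm performs
`O(m log (nB))` augmentations). -/
theorem large_capacity_augmentation_count
    (V : Type*) [Fintype V] [DecidableEq V] (E : Finset (V × V))
    (c : V × V → ℤ) (u : V × V → ℤ) (b : V → ℤ)
    (hu : ∀ e ∈ E, 0 ≤ u e) (hb : ∑ i, b i = 0)
    (hδ1 : 1 ≤ totalSupply b)
    (k : ℕ)
    (A : ℕ → Finset ((V ⊕ Bool) × (V ⊕ Bool)))
    (x : ℕ → ((V ⊕ Bool) × (V ⊕ Bool) → ℝ))
    (hA : ∀ i ≤ k, A i ⊆ auxArcs E b)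
    (hx : ∀ i ≤ k, IsFlow (A i) (auxCap u b) (Sum.inr false) (Sum.inr true) (x i))
    (hint : ∀ i ≤ k, ∃ z : ℤ, flowValue (A i) (x i) (Sum.inr false) = (z : ℝ))
    (h0 : flowValue (A 0) (x 0) (Sum.inr false) = 0)
    (hk : flowValue (A k) (x k) (Sum.inr false) = (totalSupply b : ℝ))
    (hstep : ∀ i < k,
      flowValue (A i) (x i) (Sum.inr false)
          < flowValue (A (i + 1)) (x (i + 1)) (Sum.inr false) ∧
        ((totalSupply b : ℝ) - flowValue (A i) (x i) (Sum.inr false))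
            / ((auxArcs E b).card : ℝ)
          ≤ flowValue (A (i + 1)) (x (i + 1)) (Sum.inr false)
            - flowValue (A i) (x i) (Sum.inr false)) :
    (k : ℝ) ≤ ((auxArcs E b).card : ℝ) * Real.log (totalSupply b : ℝ) + 1 := by
  have hcard : 0 < ((auxArcs E b).card : ℝ) :=
    Nat.cast_pos.mpr (auxArcs_nonempty_of_supplyNodes_nonempty E
      (supplyNodes_nonempty_of_totalSupply_ne_zero (by lia))).card_pos
  have hδ : (0 : ℝ) < totalSupply b := Int.cast_pos.mpr hδ1
  simpa only [h0, sub_zero] using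
    large_capacity_augmentation_count_general hcard hint (h0.trans_lt hδ) hk hstep
end

section
/- (Theorem 4.2(i)) Let H=(V,E) be an almost unit capacity graph with no parallel arcs, let D ≥ 3 be an integer, let x be an s–t flow in H such that every directed s–t path in the residual graph H_r(x) has at least D arcs (in particular, this holds for the flow produced by the D-shortest augmenting path algorithm), and let x* be a maximum s–t flow in H. Then v(x*) − v(x) ≤ |E|/(D−2). -/
open Finset

variable {N : Type*} [Fintype N] [DecidableEq N]

/-- An almost unit capacity graph: positive integer capacities, all arcs not
incident to `s` or `t` have capacity 1, and every directed `s`-`t` path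
contains at least one arc not incident to `s` or `t`. -/
def IsAlmostUnitCap (A : Finset (N × N)) (u : N × N → ℤ) (s t : N) : Prop :=
  (∀ e ∈ A, 0 < u e) ∧
    (∀ e ∈ A, e.1 ≠ s → e.1 ≠ t → e.2 ≠ s → e.2 ≠ t → u e = 1) ∧
    (∀ p : List N, p.Nodup → p.head? = some s → p.getLast? = some t →
      p.Chain' (fun a b => (a, b) ∈ A) →
      ∃ q ∈ p.zip p.tail, q.1 ≠ s ∧ q.1 ≠ t ∧ q.2 ≠ s ∧ q.2 ≠ t)

/-- Every directed `s`-`t` path in the residual graph of `x` has at least `D` arcs. -/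
def ResidualDistAtLeast (A : Finset (N × N)) (u : N × N → ℤ) (s t : N)
    (x : N × N → ℝ) (D : ℕ) : Prop :=
  ∀ p : List N, p.Nodup → p.head? = some s → p.getLast? = some t →
    p.Chain' (fun a b => 0 < resCap A (fun e => (u e : ℝ)) x (a, b)) →
    D + 1 ≤ p.length

/-!
Call an arc inner if it touches neither `s` nor `t`. The truncated residual distance from `s`,
clamped to `[1, D - 1]`, is a potential that rises by `D - 2` from `s` to `t`, by at most one along
every residual arc, and not at all along a residual arc touching `s` or `t`. Summing by parts,
`D - 2` times the gap `v(y) - v(x)` equals the sum over all arcs of `y - x` times the potential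
difference. Where `y > x` the arc is residual, and where `y < x` its reverse is, so an inner arc
contributes at most its capacity and any other arc nothing. In an almost unit capacity graph inner
arcs have capacity one.
-/

section NodePotentials

variable {V : Type*} [DecidableEq V] {A : Finset (V × V)} {u : V × V → ℝ} {s t : V}
  {x y : V × V → ℝ}

/-- The directed graph underlying the residual graph `H_r(x)`: `(a, b)` is an arc when its residual
capacity is positive. -/
def IsResidualArc (A : Finset (V × V)) (u x : V × V → ℝ) (a b : V) : Prop :=
  0 < resCap A u x (a, b)

theorem sum_mul_excess (x : V × V → ℝ) (φ : V → ℝ) {W : Finset V}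
    (hW : ∀ e ∈ A, e.1 ∈ W ∧ e.2 ∈ W) :
    ∑ i ∈ W, φ i * excess A x i = ∑ e ∈ A, x e * (φ e.1 - φ e.2) := by
  have sum_mul_fiber (endpoint : V × V → V) (h : ∀ e ∈ A, endpoint e ∈ W) :
      ∑ i ∈ W, φ i * ∑ e ∈ A with endpoint e = i, x e = ∑ e ∈ A, x e * φ (endpoint e) := by
    rw [← sum_fiberwise_of_maps_to h]
    refine sum_congr rfl fun i _ => ?_
    rw [mul_sum]
    refine sum_congr rfl fun e he => ?_
    rw [(mem_filter.mp he).2, mul_comm]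
  simp only [excess, outflow, inflow, mul_sub, sum_sub_distrib]
  rw [sum_mul_fiber Prod.fst fun e he => (hW e he).1,
    sum_mul_fiber Prod.snd fun e he => (hW e he).2]

theorem IsFlow.potential_rise_mul_flowValue (hx : IsFlow A u s t x) (φ : V → ℝ) :
    (φ t - φ s) * flowValue A x s = ∑ e ∈ A, x e * (φ e.2 - φ e.1) := by
  let W : Finset V := insert s (A.image Prod.fst ∪ A.image Prod.snd)
  have hW : ∀ e ∈ A, e.1 ∈ W ∧ e.2 ∈ W := fun e he =>
    ⟨mem_insert_of_mem (mem_union_left _ (mem_image_of_mem _ he)),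
      mem_insert_of_mem (mem_union_right _ (mem_image_of_mem _ he))⟩
  -- The potential `φ t - φ i` vanishes at `t`, and the excess away from `s` and `t`.
  have only_source : ∑ i ∈ W, (φ t - φ i) * excess A x i = (φ t - φ s) * excess A x s := by
    refine sum_eq_single_of_mem s (mem_insert_self _ _) fun i _ his => ?_
    by_cases hit : i = t
    · rw [hit, sub_self, zero_mul]
    · rw [hx.2.2 i his hit, mul_zero]
  rw [flowValue, ← only_source, sum_mul_excess x _ hW]
  simp only [sub_sub_sub_cancel_left]

theorem IsFlow.nonneg (hx : IsFlow A u s t x) (e : V × V) : 0 ≤ x e := by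
  by_cases he : e ∈ A
  · exact (hx.2.1 e he).1
  · exact (hx.1 e he).ge

theorem IsFlow.le_capacity (hx : IsFlow A u s t x) (e : V × V) :
    x e ≤ if e ∈ A then u e else 0 := by
  split_ifs with he
  · exact (hx.2.1 e he).2
  · exact (hx.1 e he).le

theorem IsFlow.isResidualArc_of_lt (hx : IsFlow A u s t x) {e : V × V} (he : e ∈ A)
    (hlt : x e < u e) : IsResidualArc A u x e.1 e.2 := by
  have := hx.nonneg e.swap
  simp only [IsResidualArc, resCap, he, if_true]
  linarith

theorem IsFlow.isResidualArc_swap_of_pos (hx : IsFlow A u s t x) {e : V × V} (hpos : 0 < x e) :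
    IsResidualArc A u x e.2 e.1 := by
  have := hx.le_capacity e.swap
  simp only [IsResidualArc, resCap]
  change 0 < (if e.swap ∈ A then u e.swap else 0) - x e.swap + x e
  linarith

theorem IsFlow.sub_mul_le_mul_capacity (hx : IsFlow A u s t x) (hy : IsFlow A u s t y)
    {c r : ℝ} (hc : 0 ≤ c) {e : V × V} (he : e ∈ A)
    (forward : IsResidualArc A u x e.1 e.2 → r ≤ c)
    (backward : IsResidualArc A u x e.2 e.1 → -r ≤ c) :
    (y e - x e) * r ≤ c * u e := by
  obtain ⟨hx0, hxu⟩ := hx.2.1 e he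
  obtain ⟨hy0, hyu⟩ := hy.2.1 e he
  rcases lt_trichotomy (x e) (y e) with hlt | heq | hgt
  · have hr : r ≤ c := forward (hx.isResidualArc_of_lt he (hlt.trans_le hyu))
    calc (y e - x e) * r
        ≤ (y e - x e) * c := mul_le_mul_of_nonneg_left hr (sub_nonneg.mpr hlt.le)
      _ ≤ c * u e := by rw [mul_comm]; gcongr; linarith
  · rw [heq, sub_self, zero_mul]
    exact mul_nonneg hc (hx0.trans hxu)
  · have hr : -r ≤ c := backward (hx.isResidualArc_swap_of_pos (hy0.trans_lt hgt))
    calc (y e - x e) * r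
        = (x e - y e) * -r := by ring
      _ ≤ (x e - y e) * c := mul_le_mul_of_nonneg_left hr (sub_nonneg.mpr hgt.le)
      _ ≤ c * u e := by rw [mul_comm]; gcongr; linarith

/-- The arcs incident to neither `s` nor `t`, to which the capacity restriction of an almost unit
capacity graph applies. -/
def innerArcs (A : Finset (V × V)) (s t : V) : Finset (V × V) :=
  {e ∈ A | e.1 ≠ s ∧ e.1 ≠ t ∧ e.2 ≠ s ∧ e.2 ≠ t}

theorem IsFlow.potential_rise_mul_gap_le (hx : IsFlow A u s t x) (hy : IsFlow A u s t y)
    {φ : V → ℝ} (rise_le_one : ∀ a b, IsResidualArc A u x a b → φ b ≤ φ a + 1)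
    (no_rise_at_terminals : ∀ a b, IsResidualArc A u x a b →
      a = s ∨ a = t ∨ b = s ∨ b = t → φ b ≤ φ a) :
    (φ t - φ s) * (flowValue A y s - flowValue A x s) ≤ ∑ e ∈ innerArcs A s t, u e := by
  rw [mul_sub, hy.potential_rise_mul_flowValue, hx.potential_rise_mul_flowValue,
    ← sum_sub_distrib, innerArcs, sum_filter]
  refine sum_le_sum fun e he => ?_
  rw [← sub_mul]
  split_ifs with inner
  · rw [← one_mul (u e)]
    exact hx.sub_mul_le_mul_capacity hy zero_le_one he
      (fun h => by linarith [rise_le_one _ _ h]) (fun h => by linarith [rise_le_one _ _ h])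
  · rw [← zero_mul (u e)]
    exact hx.sub_mul_le_mul_capacity hy le_rfl he
      (fun h => by linarith [no_rise_at_terminals _ _ h (by tauto)])
      (fun h => by linarith [no_rise_at_terminals _ _ h (by tauto)])

theorem IsFlow.gap_le_of_distance_labels (hx : IsFlow A u s t x) (hy : IsFlow A u s t y)
    {D : ℕ} (hD : 3 ≤ D) {d : V → ℕ} (source : d s = 0) (sink : D ≤ d t)
    (valid : ∀ a b, IsResidualArc A u x a b → d b ≤ d a + 1) :
    flowValue A y s - flowValue A x s ≤ (∑ e ∈ innerArcs A s t, u e) / ((D : ℝ) - 2) := by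
  let φ : V → ℕ := fun v => max 1 (min (d v) (D - 1))
  have rise_le_one (a b) (h : IsResidualArc A u x a b) : φ b ≤ φ a + 1 := by
    have := valid a b h
    simp only [φ]
    omega
  have no_rise_at_terminals (a b) (h : IsResidualArc A u x a b)
      (hst : a = s ∨ a = t ∨ b = s ∨ b = t) : φ b ≤ φ a := by
    have := valid a b h
    simp only [φ]
    rcases hst with rfl | rfl | rfl | rfl <;> omega
  have total_rise : (φ t : ℝ) - φ s = D - 2 := by
    have : φ t + 2 = D + φ s := by simp only [φ]; omega
    have : (φ t : ℝ) + 2 = D + φ s := mod_cast this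
    linarith
  have hD' : (3 : ℝ) ≤ D := mod_cast hD
  rw [le_div_iff₀' (by linarith), ← total_rise]
  exact hx.potential_rise_mul_gap_le hy (φ := fun v => (φ v : ℝ))
    (fun a b h => mod_cast rise_le_one a b h)
    (fun a b h hst => mod_cast no_rise_at_terminals a b h hst)

end NodePotentials

section TruncatedDistance

variable {V : Type*} {R : V → V → Prop} {a b s : V} {p : List V} {D : ℕ}

/-- `p` lists the vertices of a simple directed path from `a` to `b` in the digraph with adjacency
relation `R`; the path has `p.length - 1` arcs. -/
structure IsSimplePath (R : V → V → Prop) (a b : V) (p : List V) : Prop where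
  nodup : p.Nodup
  head : p.head? = some a
  last : p.getLast? = some b
  chain : p.IsChain R

theorem IsSimplePath.singleton (R : V → V → Prop) (a : V) : IsSimplePath R a a [a] :=
  ⟨List.nodup_singleton a, rfl, rfl, List.isChain_singleton a⟩

theorem IsSimplePath.length_pos (hp : IsSimplePath R a b p) : 0 < p.length := by
  rw [List.length_pos_iff]
  rintro rfl
  simpa using hp.head

theorem IsSimplePath.exists_prefix (hp : IsSimplePath R s b p) (ha : a ∈ p) :
    ∃ q, IsSimplePath R s a q ∧ q.length ≤ p.length := by
  obtain ⟨before, after, rfl⟩ := List.append_of_mem ha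
  have hprefix : before ++ [a] <+: before ++ a :: after := ⟨after, by simp⟩
  refine ⟨before ++ [a], ⟨hp.nodup.sublist hprefix.sublist, ?_, List.getLast?_concat,
    hp.chain.prefix hprefix⟩, hprefix.length_le⟩
  simpa only [List.head?_append, List.head?_cons] using hp.head

theorem IsSimplePath.exists_extend (hp : IsSimplePath R s a p) (hab : R a b) :
    ∃ q, IsSimplePath R s b q ∧ q.length ≤ p.length + 1 := by
  by_cases hb : b ∈ p
  · obtain ⟨q, hq, hle⟩ := hp.exists_prefix hb
    exact ⟨q, hq, hle.trans (Nat.le_succ _)⟩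
  · refine ⟨p ++ [b], ⟨?_, ?_, List.getLast?_concat, ?_⟩, by simp⟩
    · simpa only [List.concat_eq_append] using hp.nodup.concat hb
    · rw [List.head?_append, hp.head, Option.some_or]
    · refine hp.chain.append (List.isChain_singleton b) ?_
      simpa [hp.last] using hab

/-- The distance from `s` to `v` along `R`-arcs, truncated at `D`. Inserting `D` keeps the infimum
off the empty set, on which `sInf` would be `0`, when `v` is unreachable. -/
noncomputable def truncDist (R : V → V → Prop) (D : ℕ) (s v : V) : ℕ :=
  sInf (insert D {n | ∃ p, IsSimplePath R s v p ∧ p.length = n + 1})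

theorem truncDist_le (R : V → V → Prop) (D : ℕ) (s v : V) : truncDist R D s v ≤ D :=
  Nat.sInf_le (Set.mem_insert _ _)

theorem IsSimplePath.truncDist_lt_length (hp : IsSimplePath R s a p) (D : ℕ) :
    truncDist R D s a < p.length := by
  have hlen : p.length = p.length - 1 + 1 := (Nat.sub_add_cancel hp.length_pos).symm
  rw [hlen]
  exact Nat.lt_succ_of_le (Nat.sInf_le (Set.mem_insert_of_mem _ ⟨p, hp, hlen⟩))

theorem truncDist_eq_or_exists_path (R : V → V → Prop) (D : ℕ) (s v : V) :
    truncDist R D s v = D ∨ ∃ p, IsSimplePath R s v p ∧ p.length = truncDist R D s v + 1 :=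
  Nat.sInf_mem (Set.insert_nonempty D {n | ∃ p, IsSimplePath R s v p ∧ p.length = n + 1})

theorem truncDist_self (R : V → V → Prop) (D : ℕ) (s : V) : truncDist R D s s = 0 :=
  Nat.lt_one_iff.mp ((IsSimplePath.singleton R s).truncDist_lt_length D)

theorem truncDist_le_succ (hab : R a b) : truncDist R D s b ≤ truncDist R D s a + 1 := by
  rcases truncDist_eq_or_exists_path R D s a with h | ⟨p, hp, hlen⟩
  · rw [h]
    exact (truncDist_le R D s b).trans (Nat.le_succ D)
  · obtain ⟨q, hq, hle⟩ := hp.exists_extend hab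
    have := hq.truncDist_lt_length D
    omega

theorem le_truncDist (h : ∀ p, IsSimplePath R s a p → D + 1 ≤ p.length) :
    D ≤ truncDist R D s a := by
  rcases truncDist_eq_or_exists_path R D s a with heq | ⟨p, hp, hlen⟩
  · exact heq.ge
  · exact Nat.le_of_succ_le_succ ((h p hp).trans_eq hlen)

end TruncatedDistance

theorem IsAlmostUnitCap.sum_innerArcs_le_card {V : Type*} [DecidableEq V] {A : Finset (V × V)}
    {u : V × V → ℤ} {s t : V} (hauc : IsAlmostUnitCap A u s t) :
    ∑ e ∈ innerArcs A s t, (u e : ℝ) ≤ A.card := by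
  have unit_cap : ∀ e ∈ innerArcs A s t, (u e : ℝ) = 1 := by
    intro e he
    obtain ⟨heA, h₁s, h₁t, h₂s, h₂t⟩ := mem_filter.mp he
    exact mod_cast hauc.2.1 e heA h₁s h₁t h₂s h₂t
  rw [sum_congr rfl unit_cap, sum_const, nsmul_one]
  exact mod_cast card_filter_le _ _

theorem almost_unit_cap_gap_bound_arcs_general {V : Type*} [DecidableEq V] {A : Finset (V × V)}
    {u : V × V → ℝ} {s t : V} {D : ℕ} (hD : 3 ≤ D) {x y : V × V → ℝ}
    (hx : IsFlow A u s t x) (hy : IsFlow A u s t y)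
    (hdist : ∀ p, IsSimplePath (IsResidualArc A u x) s t p → D + 1 ≤ p.length) :
    flowValue A y s - flowValue A x s ≤ (∑ e ∈ innerArcs A s t, u e) / ((D : ℝ) - 2) :=
  hx.gap_le_of_distance_labels hy hD (truncDist_self _ D s) (le_truncDist hdist)
    fun _ _ h => truncDist_le_succ h

/-- **Theorem 4.2(i).** In an almost unit capacity graph with no
parallel arcs, if every `s`-`t` path in the residual graph of a flow `x` has at
least `D ≥ 3` arcs, and `x*` is a maximum flow, then
`v(x*) − v(x) ≤ |E| / (D − 2)`. -/
theorem almost_unit_cap_gap_bound_arcs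
    (H : Type*) [Fintype H] [DecidableEq H]
    (A : Finset (H × H)) (u : H × H → ℤ) (s t : H)
    (hauc : IsAlmostUnitCap A u s t)
    (D : ℕ) (hD : 3 ≤ D)
    (x : H × H → ℝ) (hx : IsFlow A (fun e => (u e : ℝ)) s t x)
    (hdist : ResidualDistAtLeast A u s t x D)
    (xstar : H × H → ℝ) (hxstar : IsFlow A (fun e => (u e : ℝ)) s t xstar)
    (hmax : ∀ y : H × H → ℝ, IsFlow A (fun e => (u e : ℝ)) s t y →
      flowValue A y s ≤ flowValue A xstar s) :
    flowValue A xstar s - flowValue A x s ≤ (A.card : ℝ) / ((D : ℝ) - 2) := by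
  have hD' : (3 : ℝ) ≤ D := mod_cast hD
  exact (almost_unit_cap_gap_bound_arcs_general hD hx hxstar
    fun p hp => hdist p hp.nodup hp.head hp.last hp.chain).trans
      (div_le_div_of_nonneg_right hauc.sum_innerArcs_le_card (by linarith))
end

section
/- (Theorem 4.2(ii)) Let H=(V,E) be an almost unit capacity graph with no parallel arcs, let D ≥ 3 be an integer, let x be an s–t flow in H such that every directed s–t path in the residual graph H_r(x) has at least D arcs, and let x* be a maximum s–t flow in H. Then v(x*) − v(x) ≤ (2|V|/(D−2))². -/
open Finset

variable {N : Type*} [Fintype N] [DecidableEq N]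

/-!
For a cut `S` separating `s` from `t`, the gap between two flow values is at most the residual
capacity across `S`. Take for `S` the set `Bₖ₊₁` of nodes within residual distance `k + 1` of `s`:
residual arcs leaving it run only from layer `k + 1` to layer `k + 2`, and while `k + 2 < D` neither
layer meets `{s, t}`, so each such arc has residual capacity at most `2`. Hence the gap is at most
`2ab ≤ (a + b)² / 2`, where `a` and `b` are the sizes of the two layers. The layers up to distance
`D - 1` form at least `(D - 2) / 2` disjoint consecutive pairs, so some pair has
`a + b ≤ 2|V| / (D - 2)`.
-/

section DirectedPath

variable {V : Type*} {R : V → V → Prop} {a b c : V} {p : List V} {k : ℕ}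

/-- A simple directed path from `a` to `b` in the digraph with adjacency relation `R`, encoded as
its list of nodes; the number of arcs is therefore `p.length - 1`. -/
structure IsDirectedPath (R : V → V → Prop) (a b : V) (p : List V) : Prop where
  nodup : p.Nodup
  head?_eq : p.head? = some a
  getLast?_eq : p.getLast? = some b
  isChain : p.IsChain R

namespace IsDirectedPath

theorem singleton (R : V → V → Prop) (a : V) : IsDirectedPath R a a [a] :=
  ⟨List.nodup_singleton a, rfl, rfl, List.isChain_singleton a⟩

theorem concat (hp : IsDirectedPath R a b p) (hbc : R b c) (hc : c ∉ p) :
    IsDirectedPath R a c (p ++ [c]) where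
  nodup := by simpa [List.nodup_append] using ⟨hp.nodup, fun _ hv h ↦ hc (h ▸ hv)⟩
  head?_eq := by simp [List.head?_append, hp.head?_eq]
  getLast?_eq := by simp
  isChain := List.isChain_append.2 ⟨hp.isChain, List.isChain_singleton c, by
    simpa [hp.getLast?_eq] using hbc⟩

theorem exists_path_length_le_of_mem (hp : IsDirectedPath R a b p) (hc : c ∈ p) :
    ∃ q, IsDirectedPath R a c q ∧ q.length ≤ p.length := by
  obtain ⟨l, r, rfl⟩ := List.append_of_mem hc
  have hprefix : l ++ [c] <+: l ++ c :: r := ⟨r, by simp⟩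
  refine ⟨l ++ [c], ⟨hp.nodup.sublist hprefix.sublist, ?_, by simp, ?_⟩, hprefix.length_le⟩
  · simpa [List.head?_append] using hp.head?_eq
  · exact hp.isChain.prefix hprefix

end IsDirectedPath

open Classical in
/-- The ball of radius `k` around `a`: the nodes reachable from `a` by a directed path with at most
`k` arcs. -/
noncomputable def pathBall [Fintype V] (R : V → V → Prop) (a : V) (k : ℕ) : Finset V :=
  {b | ∃ p, IsDirectedPath R a b p ∧ p.length ≤ k + 1}

variable [Fintype V]

theorem mem_pathBall :
    b ∈ pathBall R a k ↔ ∃ p, IsDirectedPath R a b p ∧ p.length ≤ k + 1 := by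
  simp [pathBall]

theorem pathBall_mono (R : V → V → Prop) (a : V) : Monotone (pathBall R a) := by
  intro k l hkl b hb
  obtain ⟨p, hp, hlen⟩ := mem_pathBall.1 hb
  exact mem_pathBall.2 ⟨p, hp, by omega⟩

theorem self_mem_pathBall (R : V → V → Prop) (a : V) (k : ℕ) : a ∈ pathBall R a k :=
  mem_pathBall.2 ⟨[a], .singleton R a, by simp⟩

theorem mem_pathBall_succ_of_adj (hb : b ∈ pathBall R a k) (hbc : R b c) :
    c ∈ pathBall R a (k + 1) := by
  obtain ⟨p, hp, hlen⟩ := mem_pathBall.1 hb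
  by_cases hc : c ∈ p
  · obtain ⟨q, hq, hqp⟩ := hp.exists_path_length_le_of_mem hc
    exact mem_pathBall.2 ⟨q, hq, by omega⟩
  · exact mem_pathBall.2 ⟨p ++ [c], hp.concat hbc hc, by simpa using hlen⟩

theorem notMem_pathBall {D : ℕ} (hdist : ∀ p, IsDirectedPath R a b p → D + 1 ≤ p.length)
    (hk : k < D) : b ∉ pathBall R a k := by
  intro hb
  obtain ⟨p, hp, hlen⟩ := mem_pathBall.1 hb
  have := hdist p hp
  omega

end DirectedPath

section Cut

variable {V : Type*} [DecidableEq V] {A : Finset (V × V)} {u x y : V × V → ℝ} {s t : V} {c : ℝ}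

namespace IsFlow

theorem nonneg_s9 (hx : IsFlow A u s t x) (e : V × V) : 0 ≤ x e := by
  by_cases he : e ∈ A
  · exact (hx.2.1 e he).1
  · exact (hx.1 e he).ge

theorem le_ite_capacity (hx : IsFlow A u s t x) (e : V × V) :
    x e ≤ if e ∈ A then u e else 0 := by
  split_ifs with he
  · exact (hx.2.1 e he).2
  · exact (hx.1 e he).le

theorem resCap_nonneg (hx : IsFlow A u s t x) (e : V × V) : 0 ≤ resCap A u x e :=
  add_nonneg (sub_nonneg.2 (hx.le_ite_capacity e)) (hx.nonneg_s9 e.swap)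

theorem resCap_le_two_mul (hx : IsFlow A u s t x) (hc : 0 ≤ c) {e : V × V}
    (he : e ∈ A → u e ≤ c) (he' : e.swap ∈ A → u e.swap ≤ c) : resCap A u x e ≤ 2 * c := by
  have hcap : ∀ {e'}, (e' ∈ A → u e' ≤ c) → (if e' ∈ A then u e' else 0) ≤ c := by
    intro e' h
    split_ifs with hmem
    exacts [h hmem, hc]
  have hswap : x e.swap ≤ c := (hx.le_ite_capacity e.swap).trans (hcap he')
  unfold resCap
  linarith [hcap he, hx.nonneg_s9 e]

theorem sub_swap_sub_le_resCap (hy : IsFlow A u s t y) (x : V × V → ℝ) (e : V × V) :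
    (y e - y e.swap) - (x e - x e.swap) ≤ resCap A u x e := by
  unfold resCap
  linarith [hy.le_ite_capacity e, hy.nonneg_s9 e.swap]

end IsFlow

variable [Fintype V]

theorem outflow_eq_sum (hx : ∀ e ∉ A, x e = 0) (i : V) : outflow A x i = ∑ j, x (i, j) := by
  rw [outflow, sum_filter, sum_subset (subset_univ A) fun e _ he ↦ by simp [hx e he],
    Fintype.sum_prod_type, sum_comm]
  simp

theorem inflow_eq_sum (hx : ∀ e ∉ A, x e = 0) (i : V) : inflow A x i = ∑ j, x (j, i) := by
  rw [inflow, sum_filter, sum_subset (subset_univ A) fun e _ he ↦ by simp [hx e he],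
    Fintype.sum_prod_type]
  simp

theorem sum_excess_eq_sum_cut (hx : ∀ e ∉ A, x e = 0) (S : Finset V) :
    ∑ i ∈ S, excess A x i = ∑ e ∈ S ×ˢ Sᶜ, (x e - x e.swap) := by
  have hinternal : ∑ i ∈ S, ∑ j ∈ S, (x (i, j) - x (j, i)) = 0 := by
    simp only [sum_sub_distrib]
    rw [sub_eq_zero, sum_comm]
  calc
    ∑ i ∈ S, excess A x i = ∑ i ∈ S, ∑ j, (x (i, j) - x (j, i)) := by
      simp only [excess, outflow_eq_sum hx, inflow_eq_sum hx, sum_sub_distrib]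
    _ = ∑ i ∈ S, ∑ j ∈ Sᶜ, (x (i, j) - x (j, i)) := by
      simp only [← sum_add_sum_compl S]
      rw [sum_add_distrib, hinternal, zero_add]
    _ = ∑ e ∈ S ×ˢ Sᶜ, (x e - x e.swap) := by
      simp only [sum_product, Prod.swap_prod_mk]

namespace IsFlow

theorem flowValue_eq_sum_cut (hx : IsFlow A u s t x) {S : Finset V} (hs : s ∈ S) (ht : t ∉ S) :
    flowValue A x s = ∑ e ∈ S ×ˢ Sᶜ, (x e - x e.swap) := by
  rw [← sum_excess_eq_sum_cut hx.1, sum_eq_single_of_mem s hs, flowValue]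
  exact fun i hi his ↦ hx.2.2 i his (ne_of_mem_of_not_mem hi ht)

theorem flowValue_sub_le_sum_resCap (hx : IsFlow A u s t x) (hy : IsFlow A u s t y)
    {S : Finset V} (hs : s ∈ S) (ht : t ∉ S) :
    flowValue A y s - flowValue A x s ≤ ∑ e ∈ S ×ˢ Sᶜ, resCap A u x e := by
  rw [hx.flowValue_eq_sum_cut hs ht, hy.flowValue_eq_sum_cut hs ht, ← sum_sub_distrib]
  exact sum_le_sum fun e _ ↦ hy.sub_swap_sub_le_resCap x e

end IsFlow

end Cut

section NestedCuts

variable {V : Type*} [DecidableEq V] {A : Finset (V × V)} {u x y : V × V → ℝ} {s t : V} {c : ℝ}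
  {S₀ S₁ S₂ : Finset V}

/-- Adjacency in the residual graph of `x`. -/
def ResidualAdj (A : Finset (V × V)) (u x : V × V → ℝ) (i j : V) : Prop :=
  0 < resCap A u x (i, j)

namespace IsFlow

theorem sum_resCap_cut_eq_sum_layers [Fintype V] (hx : IsFlow A u s t x)
    (hadj₀ : ∀ i ∈ S₀, ∀ j, ResidualAdj A u x i j → j ∈ S₁)
    (hadj₁ : ∀ i ∈ S₁, ∀ j, ResidualAdj A u x i j → j ∈ S₂) :
    ∑ e ∈ S₁ ×ˢ S₁ᶜ, resCap A u x e = ∑ e ∈ (S₁ \ S₀) ×ˢ (S₂ \ S₁), resCap A u x e := by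
  have hsub : (S₁ \ S₀) ×ˢ (S₂ \ S₁) ⊆ S₁ ×ˢ S₁ᶜ :=
    product_subset_product sdiff_subset fun j hj ↦ mem_compl.2 (mem_sdiff.1 hj).2
  refine (sum_subset hsub ?_).symm
  rintro ⟨i, j⟩ hcut hlayers
  obtain ⟨hi, hj⟩ : i ∈ S₁ ∧ j ∉ S₁ := by simpa using hcut
  refine ((hx.resCap_nonneg (i, j)).eq_of_not_lt fun hij ↦ hlayers ?_).symm
  exact mk_mem_product (mem_sdiff.2 ⟨hi, fun hi₀ ↦ hj (hadj₀ i hi₀ j hij)⟩)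
    (mem_sdiff.2 ⟨hadj₁ i hi j hij, hj⟩)

theorem flowValue_sub_le_mul_card_layers [Finite V] (hx : IsFlow A u s t x)
    (hy : IsFlow A u s t y) (hc : 0 ≤ c)
    (hu : ∀ e ∈ A, e.1 ≠ s → e.1 ≠ t → e.2 ≠ s → e.2 ≠ t → u e ≤ c)
    (hs : s ∈ S₀) (ht : t ∉ S₂) (h₀₁ : S₀ ⊆ S₁) (h₁₂ : S₁ ⊆ S₂)
    (hadj₀ : ∀ i ∈ S₀, ∀ j, ResidualAdj A u x i j → j ∈ S₁)
    (hadj₁ : ∀ i ∈ S₁, ∀ j, ResidualAdj A u x i j → j ∈ S₂) :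
    flowValue A y s - flowValue A x s ≤ #(S₁ \ S₀) * #(S₂ \ S₁) * (2 * c) := by
  have := Fintype.ofFinite V
  have hresCap : ∀ e ∈ (S₁ \ S₀) ×ˢ (S₂ \ S₁), resCap A u x e ≤ 2 * c := by
    rintro ⟨i, j⟩ he
    obtain ⟨⟨hi₁, hi₀⟩, hj₂, hj₁⟩ : (i ∈ S₁ ∧ i ∉ S₀) ∧ j ∈ S₂ ∧ j ∉ S₁ := by simpa using he
    have his : i ≠ s := (ne_of_mem_of_not_mem hs hi₀).symm
    have hit : i ≠ t := ne_of_mem_of_not_mem (h₁₂ hi₁) ht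
    have hjs : j ≠ s := (ne_of_mem_of_not_mem (h₀₁ hs) hj₁).symm
    have hjt : j ≠ t := ne_of_mem_of_not_mem hj₂ ht
    exact hx.resCap_le_two_mul hc (fun hij ↦ hu _ hij his hit hjs hjt)
      fun hji ↦ hu _ hji hjs hjt his hit
  calc
    flowValue A y s - flowValue A x s ≤ ∑ e ∈ S₁ ×ˢ S₁ᶜ, resCap A u x e :=
      hx.flowValue_sub_le_sum_resCap hy (h₀₁ hs) fun h ↦ ht (h₁₂ h)
    _ = ∑ e ∈ (S₁ \ S₀) ×ˢ (S₂ \ S₁), resCap A u x e :=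
      hx.sum_resCap_cut_eq_sum_layers hadj₀ hadj₁
    _ ≤ #((S₁ \ S₀) ×ˢ (S₂ \ S₁)) • (2 * c) := sum_le_card_nsmul _ _ _ hresCap
    _ = #(S₁ \ S₀) * #(S₂ \ S₁) * (2 * c) := by rw [card_product, nsmul_eq_mul, Nat.cast_mul]

theorem flowValue_sub_le_sq_card_sub [Finite V] (hx : IsFlow A u s t x)
    (hy : IsFlow A u s t y) (hc : 0 ≤ c)
    (hu : ∀ e ∈ A, e.1 ≠ s → e.1 ≠ t → e.2 ≠ s → e.2 ≠ t → u e ≤ c)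
    (hs : s ∈ S₀) (ht : t ∉ S₂) (h₀₁ : S₀ ⊆ S₁) (h₁₂ : S₁ ⊆ S₂)
    (hadj₀ : ∀ i ∈ S₀, ∀ j, ResidualAdj A u x i j → j ∈ S₁)
    (hadj₁ : ∀ i ∈ S₁, ∀ j, ResidualAdj A u x i j → j ∈ S₂) :
    flowValue A y s - flowValue A x s ≤ c / 2 * (#S₂ - #S₀ : ℝ) ^ 2 := by
  calc
    flowValue A y s - flowValue A x s ≤ #(S₁ \ S₀) * #(S₂ \ S₁) * (2 * c) :=
      hx.flowValue_sub_le_mul_card_layers hy hc hu hs ht h₀₁ h₁₂ hadj₀ hadj₁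
    _ = c / 2 * (4 * #(S₁ \ S₀) * #(S₂ \ S₁)) := by ring
    _ ≤ c / 2 * (#(S₁ \ S₀) + #(S₂ \ S₁)) ^ 2 := by
      gcongr
      exact four_mul_le_sq_add _ _
    _ = c / 2 * (#S₂ - #S₀ : ℝ) ^ 2 := by
      rw [cast_card_sdiff h₀₁, cast_card_sdiff h₁₂]
      ring

end IsFlow

end NestedCuts

theorem exists_lt_nsmul_sub_le {G : Type*} [AddCommGroup G] [LinearOrder G] [IsOrderedAddMonoid G]
    (f : ℕ → G) {n : ℕ} (hn : 0 < n) : ∃ m < n, n • (f (m + 1) - f m) ≤ f n - f 0 := by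
  have hsum : ∑ m ∈ range n, n • (f (m + 1) - f m) ≤ ∑ _m ∈ range n, (f n - f 0) := by
    rw [← smul_sum, sum_range_sub, sum_const, card_range]
  simpa using exists_le_of_sum_le (nonempty_range_iff.2 hn.ne') hsum

theorem exists_card_pathBall_sub_le {V : Type*} [Fintype V] (R : V → V → Prop) (a : V)
    {D : ℕ} (hD : 3 ≤ D) :
    ∃ k, k + 2 < D ∧
      (#(pathBall R a (k + 2)) - #(pathBall R a k) : ℝ) ≤ 2 * Fintype.card V / (D - 2) := by
  set n := (D - 1) / 2
  obtain ⟨m, hm, hle⟩ :=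
    exists_lt_nsmul_sub_le (fun i ↦ (#(pathBall R a (2 * i)) : ℝ)) (n := n) (by omega)
  refine ⟨2 * m, by omega, ?_⟩
  set d : ℝ := #(pathBall R a (2 * m + 2)) - #(pathBall R a (2 * m))
  have hd : 0 ≤ d := sub_nonneg.2 <| by
    exact_mod_cast card_le_card (pathBall_mono R a (by omega))
  have hnd : n * d ≤ Fintype.card V := by
    calc
      n * d ≤ #(pathBall R a (2 * n)) - #(pathBall R a (2 * 0)) := by
        simpa only [nsmul_eq_mul, mul_add, mul_one] using hle
      _ ≤ #(pathBall R a (2 * n)) := sub_le_self _ (Nat.cast_nonneg _)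
      _ ≤ Fintype.card V := by exact_mod_cast card_le_univ _
  have hD_le : (D : ℝ) ≤ 2 * n + 2 := by exact_mod_cast (by omega : D ≤ 2 * n + 2)
  have hD_pos : (0 : ℝ) < D - 2 := sub_pos.2 (by exact_mod_cast hD)
  rw [le_div_iff₀ hD_pos]
  calc
    d * (D - 2) ≤ d * (2 * n) := by gcongr; linarith
    _ ≤ 2 * Fintype.card V := by linarith

theorem almost_unit_cap_gap_bound_nodes_sq_general
    {H : Type*} [Fintype H] [DecidableEq H] {A : Finset (H × H)} {u x y : H × H → ℝ} {s t : H}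
    {c : ℝ} (hc : 0 ≤ c)
    (hu : ∀ e ∈ A, e.1 ≠ s → e.1 ≠ t → e.2 ≠ s → e.2 ≠ t → u e ≤ c)
    {D : ℕ} (hD : 3 ≤ D) (hx : IsFlow A u s t x)
    (hdist : ∀ p, IsDirectedPath (ResidualAdj A u x) s t p → D + 1 ≤ p.length)
    (hy : IsFlow A u s t y) :
    flowValue A y s - flowValue A x s
      ≤ c / 2 * (2 * (Fintype.card H : ℝ) / ((D : ℝ) - 2)) ^ 2 := by
  obtain ⟨k, hk, hcard⟩ := exists_card_pathBall_sub_le (ResidualAdj A u x) s hD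
  set B := pathBall (ResidualAdj A u x) s
  have hB : Monotone B := pathBall_mono _ s
  calc
    flowValue A y s - flowValue A x s ≤ c / 2 * (#(B (k + 2)) - #(B k) : ℝ) ^ 2 :=
      hx.flowValue_sub_le_sq_card_sub hy hc hu (self_mem_pathBall _ s k) (notMem_pathBall hdist hk)
        (hB k.le_succ) (hB (k + 1).le_succ) (fun _ hi _ ↦ mem_pathBall_succ_of_adj hi)
        fun _ hi _ ↦ mem_pathBall_succ_of_adj hi
    _ ≤ c / 2 * (2 * (Fintype.card H : ℝ) / ((D : ℝ) - 2)) ^ 2 := by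
      have hcard_nonneg : (0 : ℝ) ≤ #(B (k + 2)) - #(B k) :=
        sub_nonneg.2 (by exact_mod_cast card_le_card (hB (by omega)))
      gcongr

/-- **Theorem 4.2(ii).** In an almost unit capacity graph with no
parallel arcs, if every `s`-`t` path in the residual graph of a flow `x` has at
least `D ≥ 3` arcs, and `x*` is a maximum flow, then
`v(x*) − v(x) ≤ (2|V| / (D − 2))²`. -/
theorem almost_unit_cap_gap_bound_nodes_sq
    (H : Type*) [Fintype H] [DecidableEq H]
    (A : Finset (H × H)) (u : H × H → ℤ) (s t : H)
    (hauc : IsAlmostUnitCap A u s t)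
    (D : ℕ) (hD : 3 ≤ D)
    (x : H × H → ℝ) (hx : IsFlow A (fun e => (u e : ℝ)) s t x)
    (hdist : ResidualDistAtLeast A u s t x D)
    (xstar : H × H → ℝ) (hxstar : IsFlow A (fun e => (u e : ℝ)) s t xstar)
    (hmax : ∀ y : H × H → ℝ, IsFlow A (fun e => (u e : ℝ)) s t y →
      flowValue A y s ≤ flowValue A xstar s) :
    flowValue A xstar s - flowValue A x s
      ≤ (2 * (Fintype.card H : ℝ) / ((D : ℝ) - 2)) ^ 2 := by
  have hgap := almost_unit_cap_gap_bound_nodes_sq_general zero_le_one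
    (fun e he h₁ h₂ h₃ h₄ ↦ by simp [hauc.2.1 e he h₁ h₂ h₃ h₄]) hD hx
    (fun p hp ↦ hdist p hp.nodup hp.head?_eq hp.getLast?_eq hp.isChain) hxstar
  linarith [sq_nonneg (2 * (Fintype.card H : ℝ) / ((D : ℝ) - 2))]
end

section
/- Let n and D be positive integers with D ≥ 3, let L ≥ D−2 be an integer, and let a_0, a_1, …, a_L be nonnegative integers with Σ_{i=0}^{L} a_i ≤ n. Then there exists an index 0 ≤ i < L such that a_i · a_{i+1} ≤ (2n/(D−2))². -/
/-!
Each `a i` occurs in at most two of the `L` consecutive sums `a i + a (i + 1)`, so one of these sums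
is at most `2 * s / L`, where `s` bounds the total; by AM-GM its two terms have product at most
`(s / L) ^ 2`.
-/

section OrderedAddCommMonoid

variable {M : Type*} [AddCommMonoid M] [PartialOrder M] [IsOrderedAddMonoid M]

theorem sum_range_add_succ_le_two_nsmul {a : ℕ → M} {L : ℕ} (h₀ : 0 ≤ a 0) (hL : 0 ≤ a L) :
    ∑ i ∈ Finset.range L, (a i + a (i + 1)) ≤ 2 • ∑ i ∈ Finset.range (L + 1), a i := by
  have left_terms : ∑ i ∈ Finset.range L, a i ≤ ∑ i ∈ Finset.range (L + 1), a i := by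
    rw [Finset.sum_range_succ]
    exact le_add_of_nonneg_right hL
  have right_terms : ∑ i ∈ Finset.range L, a (i + 1) ≤ ∑ i ∈ Finset.range (L + 1), a i := by
    rw [Finset.sum_range_succ']
    exact le_add_of_nonneg_right h₀
  rw [Finset.sum_add_distrib, two_nsmul]
  exact add_le_add left_terms right_terms

end OrderedAddCommMonoid

theorem mul_le_sq_of_add_le_two_mul {R : Type*} [CommRing R] [LinearOrder R]
    [IsStrictOrderedRing R] {x y c : R} (hxy : 0 ≤ x + y) (h : x + y ≤ 2 * c) :
    x * y ≤ c ^ 2 := by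
  have four_mul_le : 4 * (x * y) ≤ 4 * c ^ 2 := calc
    4 * (x * y) = 4 * x * y := (mul_assoc 4 x y).symm
    _ ≤ (x + y) ^ 2 := four_mul_le_sq_add x y
    _ ≤ (2 * c) ^ 2 := pow_le_pow_left₀ hxy h 2
    _ = 4 * c ^ 2 := by ring
  exact le_of_mul_le_mul_left four_mul_le four_pos

section LinearOrderedField

variable {K : Type*} [Field K] [LinearOrder K] [IsStrictOrderedRing K]
  {a : ℕ → K} {L : ℕ} {s : K}

theorem exists_add_succ_le_two_mul_div (hL : 0 < L) (h₀ : 0 ≤ a 0) (haL : 0 ≤ a L)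
    (hsum : ∑ i ∈ Finset.range (L + 1), a i ≤ s) :
    ∃ i < L, a i + a (i + 1) ≤ 2 * (s / L) := by
  have hL' : (L : K) ≠ 0 := Nat.cast_ne_zero.mpr hL.ne'
  have sum_le : ∑ i ∈ Finset.range L, (a i + a (i + 1)) ≤
      ∑ _i ∈ Finset.range L, 2 * (s / L) := calc
    _ ≤ 2 • ∑ i ∈ Finset.range (L + 1), a i := sum_range_add_succ_le_two_nsmul h₀ haL
    _ ≤ 2 • s := nsmul_le_nsmul_right hsum 2
    _ = ∑ _i ∈ Finset.range L, 2 * (s / L) := by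
      rw [Finset.sum_const, Finset.card_range, nsmul_eq_mul, nsmul_eq_mul, Nat.cast_ofNat]
      field_simp
  simpa only [Finset.mem_range] using
    Finset.exists_le_of_sum_le (Finset.nonempty_range_iff.mpr hL.ne') sum_le

theorem layer_pigeonhole_general (hL : 0 < L) (ha : ∀ i ≤ L, 0 ≤ a i)
    (hsum : ∑ i ∈ Finset.range (L + 1), a i ≤ s) :
    ∃ i < L, a i * a (i + 1) ≤ (s / L) ^ 2 := by
  obtain ⟨i, hi, hadd⟩ :=
    exists_add_succ_le_two_mul_div hL (ha 0 L.zero_le) (ha L le_rfl) hsum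
  exact ⟨i, hi, mul_le_sq_of_add_le_two_mul (add_nonneg (ha i hi.le) (ha (i + 1) hi)) hadd⟩

end LinearOrderedField

/-- Let `n, D` be positive integers with `D ≥ 3`, let
`L ≥ D − 2`, and let `a_0, …, a_L` be nonnegative integers with
`Σ_{i=0}^{L} a_i ≤ n`.  Then some consecutive product satisfies
`a_i · a_{i+1} ≤ (2n / (D − 2))²`. -/
theorem layer_pigeonhole
    (n D : ℕ) (hn : 0 < n) (hD : 3 ≤ D)
    (L : ℕ) (hL : D - 2 ≤ L)
    (a : ℕ → ℕ) (hsum : ∑ i ∈ Finset.range (L + 1), a i ≤ n) :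
    ∃ i < L, ((a i : ℝ) * (a (i + 1) : ℝ)) ≤ (2 * (n : ℝ) / ((D : ℝ) - 2)) ^ 2 := by
  obtain ⟨d, rfl⟩ : ∃ d, D = d + 2 := ⟨D - 2, by omega⟩
  have hd : 0 < d := by omega
  obtain ⟨i, hi, hmul⟩ := layer_pigeonhole_general (a := fun i ↦ (a i : ℝ)) (s := n)
    (hd.trans_le hL) (fun i _ ↦ (a i).cast_nonneg) (mod_cast hsum)
  refine ⟨i, hi, hmul.trans ?_⟩
  rw [Nat.cast_add, Nat.cast_ofNat, add_sub_cancel_right]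
  gcongr
  · exact le_mul_of_one_le_left n.cast_nonneg one_le_two
  · exact hL
end
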